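/- arXiv:1512.06183 — 5 statements merged into one kernel-verified Lean document; each statement's English description precedes it below -/
import Mathlib

section
/- Let n ≥ 3 be a natural number, let k be a natural number with 1 ≤ k and 2k ≤ n, let a > 0 be a real number, and set r = a/(2·sin(kπ/n)). Then (1 - a²/(2r²) + i·√(1 - (1 - a²/(2r²))²))^n = 1. -/
theorem regular_star_polygon_root (n : ℕ) (hn : 3 ≤ n) (k : ℕ) (hk1 : 1 ≤ k) (hk2 : 2 * k ≤ n)
    (a : ℝ) (ha : 0 < a) (r : ℝ) (hr : r = a / (2 * Real.sin (k * Real.pi / n))) :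
    (((1 - a ^ 2 / (2 * r ^ 2) : ℝ) : ℂ) +
      Complex.I * (Real.sqrt (1 - (1 - a ^ 2 / (2 * r ^ 2)) ^ 2) : ℝ)) ^ n = 1 := by
  have hn0 : (0 : ℝ) < n := by exact_mod_cast (by omega : 0 < n)
  have hk0 : (0 : ℝ) < k := by exact_mod_cast hk1
  have hk2' : 2 * (k : ℝ) ≤ n := by exact_mod_cast hk2
  have hpi := Real.pi_pos
  obtain ⟨t, ht⟩ : ∃ t : ℝ, t = k * Real.pi / n := ⟨_, rfl⟩
  have ht0 : 0 < t := by rw [ht]; positivity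
  have ht1 : 2 * t ≤ Real.pi := by
    rw [ht, ← mul_div_assoc, div_le_iff₀ hn0]
    nlinarith
  have hnt : (n : ℝ) * (2 * t) = k * (2 * Real.pi) := by
    rw [ht]; field_simp
  rw [← ht] at hr
  have hs : 0 < Real.sin t := Real.sin_pos_of_pos_of_lt_pi ht0 (by linarith)
  have hc : 1 - a ^ 2 / (2 * r ^ 2) = Real.cos (2 * t) := by
    have h1 : a ^ 2 / (2 * r ^ 2) = 2 * Real.sin t ^ 2 := by
      rw [hr]; field_simp
    rw [h1, Real.cos_two_mul, Real.cos_sq']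
    ring
  have hq : Real.sqrt (1 - Real.cos (2 * t) ^ 2) = Real.sin (2 * t) := by
    rw [← Real.sin_sq]
    exact Real.sqrt_sq (Real.sin_nonneg_of_nonneg_of_le_pi (by linarith) ht1)
  rw [hc, hq, Complex.ofReal_cos, Complex.ofReal_sin, mul_comm Complex.I,
    ← Complex.exp_mul_I, ← Complex.exp_nat_mul, Complex.exp_eq_one_iff]
  refine ⟨k, ?_⟩
  have h := congrArg (fun x : ℝ => (x : ℂ)) hnt
  push_cast at h ⊢
  linear_combination Complex.I * h
end

section
/- Let r > 0 be a real number and let α, β, γ ∈ (0, π) with α + β + γ = 2π. Set a = 2r·sin(α/2), b = 2r·sin(β/2), c = 2r·sin(γ/2) and s = (a+b+c)/2. Then (1/4)·(a·√(4r²−a²) + b·√(4r²−b²) + c·√(4r²−c²)) = √(s(s−a)(s−b)(s−c)). -/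
theorem triangle_area_eq_heron (r : ℝ) (hr : 0 < r) (α β γ : ℝ)
    (hα : α ∈ Set.Ioo 0 Real.pi) (hβ : β ∈ Set.Ioo 0 Real.pi)
    (hγ : γ ∈ Set.Ioo 0 Real.pi) (hsum : α + β + γ = 2 * Real.pi)
    (a b c s : ℝ) (ha : a = 2 * r * Real.sin (α / 2)) (hb : b = 2 * r * Real.sin (β / 2))
    (hc : c = 2 * r * Real.sin (γ / 2)) (hs : s = (a + b + c) / 2) :
    (1 / 4) * (a * Real.sqrt (4 * r ^ 2 - a ^ 2) + b * Real.sqrt (4 * r ^ 2 - b ^ 2) +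
        c * Real.sqrt (4 * r ^ 2 - c ^ 2)) =
      Real.sqrt (s * (s - a) * (s - b) * (s - c)) := by
  have key : ∀ θ ∈ Set.Ioo 0 Real.pi, Real.sqrt (4 * r ^ 2 - (2 * r * Real.sin (θ / 2)) ^ 2) =
      2 * r * Real.cos (θ / 2) := by
    intro θ hθ
    have hcos : 0 ≤ Real.cos (θ / 2) :=
      Real.cos_nonneg_of_mem_Icc ⟨by linarith [hθ.1, hθ.2], by linarith [hθ.1, hθ.2]⟩
    rw [show 4 * r ^ 2 - (2 * r * Real.sin (θ / 2)) ^ 2 = (2 * r * Real.cos (θ / 2)) ^ 2 by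
      rw [mul_pow _ (Real.cos (θ / 2)), Real.cos_sq']; ring]
    exact Real.sqrt_sq (by positivity)
  have pos : ∀ θ ∈ Set.Ioo 0 Real.pi, 0 < Real.sin (θ / 2) := by
    intro θ hθ
    exact Real.sin_pos_of_pos_of_lt_pi (by linarith [hθ.1]) (by linarith [hθ.1, hθ.2])
  have px := pos α hα
  have py := pos β hβ
  have pz := pos γ hγ
  have hg : γ / 2 = Real.pi - (α / 2 + β / 2) := by linarith
  have hsC : Real.sin (γ / 2) = Real.sin (α / 2) * Real.cos (β / 2) +
      Real.cos (α / 2) * Real.sin (β / 2) := by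
    rw [hg, Real.sin_pi_sub, Real.sin_add]
  have hcC : Real.cos (γ / 2) = Real.sin (α / 2) * Real.sin (β / 2) -
      Real.cos (α / 2) * Real.cos (β / 2) := by
    rw [hg, Real.cos_pi_sub, Real.cos_add]; ring
  have h1 := Real.sin_sq_add_cos_sq (α / 2)
  have h2 := Real.sin_sq_add_cos_sq (β / 2)
  have h3 := Real.sin_sq_add_cos_sq (γ / 2)
  rw [hs, ha, hb, hc, key α hα, key β hβ, key γ hγ]
  generalize Real.sin (α / 2) = x at *
  generalize Real.sin (β / 2) = y at *
  generalize Real.sin (γ / 2) = z at *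
  generalize Real.cos (α / 2) = u at *
  generalize Real.cos (β / 2) = v at *
  generalize Real.cos (γ / 2) = w at *
  have hlaw : x ^ 2 + y ^ 2 - z ^ 2 = 2 * x * y * w := by
    rw [hsC, hcC]
    linear_combination (-x ^ 2) * h2 + (-y ^ 2) * h1
  have hsumc : x * u + y * v + z * w = 2 * x * y * z := by
    rw [hsC, hcC]
    linear_combination (-x * u) * h2 + (-y * v) * h1
  have hR : (2 * r * x + 2 * r * y + 2 * r * z) / 2 *
      ((2 * r * x + 2 * r * y + 2 * r * z) / 2 - 2 * r * x) *
      ((2 * r * x + 2 * r * y + 2 * r * z) / 2 - 2 * r * y) *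
      ((2 * r * x + 2 * r * y + 2 * r * z) / 2 - 2 * r * z) = (2 * r ^ 2 * (x * y * z)) ^ 2 := by
    linear_combination (-r ^ 4 * (x ^ 2 + y ^ 2 - z ^ 2 + 2 * x * y * w)) * hlaw -
      4 * r ^ 4 * x ^ 2 * y ^ 2 * h3
  rw [hR, Real.sqrt_sq (by positivity)]
  linear_combination r ^ 2 * hsumc
end

section
/- Let r > 0 be a real number and let α, β, γ, δ ∈ (0, 2π) with α + β + γ + δ = 2π. Set a = 2r·sin(α/2), b = 2r·sin(β/2), c = 2r·sin(γ/2), d = 2r·sin(δ/2) and s = (a+b+c+d)/2. Then 16·r²·(s−a)(s−b)(s−c)(s−d) = (ab+cd)(ac+bd)(ad+bc). -/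
theorem quad_aux (x y z : ℝ) : Real.sin x * Real.sin y + Real.sin z * Real.sin (x + y + z)
    = Real.sin (x + z) * Real.sin (y + z) := by
  simp only [Real.sin_add, Real.cos_add]
  have hz := Real.sin_sq_add_cos_sq z
  linear_combination (-(Real.sin x * Real.sin y)) * hz

theorem quad_aux2 (x y z : ℝ) :
    Real.sin x ^ 2 + Real.sin y ^ 2 - Real.sin z ^ 2 - Real.sin (x + y + z) ^ 2
    = -2 * Real.cos (x + y) * (Real.sin (x + z) * Real.sin (y + z)) := by
  simp only [Real.sin_add, Real.cos_add]
  have hx := Real.cos_sq' x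
  have hy := Real.cos_sq' y
  have hz := Real.cos_sq' z
  ring_nf
  simp only [hx, hy, hz]
  ring

theorem cyclic_quadrilateral_circumradius_identity (r : ℝ) (hr : 0 < r) (α β γ δ : ℝ)
    (hα : α ∈ Set.Ioo 0 (2 * Real.pi)) (hβ : β ∈ Set.Ioo 0 (2 * Real.pi))
    (hγ : γ ∈ Set.Ioo 0 (2 * Real.pi)) (hδ : δ ∈ Set.Ioo 0 (2 * Real.pi))
    (hsum : α + β + γ + δ = 2 * Real.pi)
    (a b c d s : ℝ) (ha : a = 2 * r * Real.sin (α / 2)) (hb : b = 2 * r * Real.sin (β / 2))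
    (hc : c = 2 * r * Real.sin (γ / 2)) (hd : d = 2 * r * Real.sin (δ / 2))
    (hs : s = (a + b + c + d) / 2) :
    16 * r ^ 2 * ((s - a) * (s - b) * (s - c) * (s - d)) =
      (a * b + c * d) * (a * c + b * d) * (a * d + b * c) := by
  have hw : Real.sin (δ / 2) = Real.sin (α / 2 + β / 2 + γ / 2) := by
    rw [show δ / 2 = Real.pi - (α / 2 + β / 2 + γ / 2) by linarith, Real.sin_pi_sub]
  rw [hw] at hd
  generalize α / 2 = x at *
  generalize β / 2 = y at *
  generalize γ / 2 = z at *
  have h1 := quad_aux x y z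
  have h2 : Real.sin x * Real.sin z + Real.sin y * Real.sin (x + y + z)
      = Real.sin (x + y) * Real.sin (y + z) := by
    have := quad_aux x z y
    rw [show x + z + y = x + y + z by ring, show z + y = y + z by ring] at this
    exact this
  have h3 : Real.sin y * Real.sin z + Real.sin x * Real.sin (x + y + z)
      = Real.sin (x + y) * Real.sin (x + z) := by
    have := quad_aux y z x
    rw [show y + z + x = x + y + z by ring, show z + x = x + z by ring,
      show y + x = x + y by ring] at this
    exact this
  have h4 := quad_aux2 x y z
  have h5 := Real.sin_sq_add_cos_sq (x + y)
  generalize Real.sin (x + y + z) = W at *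
  generalize Real.sin (x + y) = p at *
  generalize Real.cos (x + y) = k at *
  generalize Real.sin (x + z) = q at *
  generalize Real.sin (y + z) = t at *
  generalize Real.sin x = X at *
  generalize Real.sin y = Y at *
  generalize Real.sin z = Z at *
  have e1 : a * b + c * d = 4 * r ^ 2 * (q * t) := by
    rw [ha, hb, hc, hd, ← h1]; ring
  have e2 : a * c + b * d = 4 * r ^ 2 * (p * t) := by
    rw [ha, hb, hc, hd, ← h2]; ring
  have e3 : a * d + b * c = 4 * r ^ 2 * (p * q) := by
    rw [ha, hb, hc, hd, ← h3]; ring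
  have e4 : (s - a) * (s - b) * (s - c) * (s - d)
      = r ^ 4 * (4 * (X * Y + Z * W) ^ 2 - (X ^ 2 + Y ^ 2 - Z ^ 2 - W ^ 2) ^ 2) := by
    rw [hs, ha, hb, hc, hd]; ring
  rw [e1, e2, e3, e4, h1, h4]
  linear_combination (-64) * r ^ 6 * (q * t) ^ 2 * h5
end

section
/- Let n ≥ 3, let l₁, …, lₙ > 0 be real numbers, and suppose there exists an index i with 1 ≤ i ≤ n−1 and lᵢ ≥ lₙ. Then there is no real number r with 2r > lₖ for all k satisfying 1/√(4(r/lₙ)² − 1) = ∑_{k=1}^{n−1} 1/√(4(r/lₖ)² − 1). -/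
theorem two_long_sides_imp_pci (n : ℕ) (hn : 3 ≤ n) (l : ℕ → ℝ)
    (hl : ∀ k ∈ Finset.Icc 1 n, 0 < l k)
    (hi : ∃ i ∈ Finset.Icc 1 (n - 1), l n ≤ l i) :
    ¬ ∃ r : ℝ, (∀ k ∈ Finset.Icc 1 n, l k < 2 * r) ∧
      1 / Real.sqrt (4 * (r / l n) ^ 2 - 1) =
        ∑ k ∈ Finset.Icc 1 (n - 1), 1 / Real.sqrt (4 * (r / l k) ^ 2 - 1) := by
  rintro ⟨r, hr, heq⟩
  obtain ⟨i, hi, hil⟩ := hi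
  have hsub : ∀ k ∈ Finset.Icc 1 (n - 1), k ∈ Finset.Icc 1 n := by
    intro k hk
    simp only [Finset.mem_Icc] at hk ⊢
    omega
  have hnm : n ∈ Finset.Icc 1 n := by
    simp only [Finset.mem_Icc]
    omega
  have hr0 : 0 < r := by linarith [hr n hnm, hl n hnm]
  have hpos : ∀ k ∈ Finset.Icc 1 n, 0 < 4 * (r / l k) ^ 2 - 1 := by
    intro k hk
    have h1 := hl k hk
    have h2 := hr k hk
    have h3 : 1 / 2 < r / l k := by
      rw [lt_div_iff₀ h1]
      linarith
    nlinarith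
  have hterm : ∀ k ∈ Finset.Icc 1 (n - 1), 0 < 1 / Real.sqrt (4 * (r / l k) ^ 2 - 1) := by
    intro k hk
    have := Real.sqrt_pos.mpr (hpos k (hsub k hk))
    positivity
  obtain ⟨j, hj, hji⟩ : ∃ j ∈ Finset.Icc 1 (n - 1), j ≠ i := by
    by_cases h : i = 1
    · exact ⟨2, by simp only [Finset.mem_Icc]; omega, by omega⟩
    · exact ⟨1, by simp only [Finset.mem_Icc]; omega, by omega⟩
  have hlt : 1 / Real.sqrt (4 * (r / l i) ^ 2 - 1) <
      ∑ k ∈ Finset.Icc 1 (n - 1), 1 / Real.sqrt (4 * (r / l k) ^ 2 - 1) :=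
    Finset.single_lt_sum hji hi hj (hterm j hj) (fun k hk _ => (hterm k hk).le)
  have hle : 1 / Real.sqrt (4 * (r / l n) ^ 2 - 1) ≤
      1 / Real.sqrt (4 * (r / l i) ^ 2 - 1) := by
    apply one_div_le_one_div_of_le (Real.sqrt_pos.mpr (hpos i (hsub i hi)))
    apply Real.sqrt_le_sqrt
    have h1 := hl n hnm
    have h2 := hl i (hsub i hi)
    have h3 : r / l i ≤ r / l n := div_le_div_of_nonneg_left hr0.le h1 hil
    have h4 : 0 < r / l i := by positivity
    nlinarith
  linarith
end

section
/- Let a > 0 be a real number and let k ∈ {1, 2, 3}. Then r = a/(2·sin(kπ/7)) satisfies a⁶ − 7a⁴r² + 14a²r⁴ − 7r⁶ = 0. -/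
theorem heptagon_circumradius_polynomial (a : ℝ) (ha : 0 < a) (k : ℕ)
    (hk : k ∈ ({1, 2, 3} : Set ℕ)) (r : ℝ) (hr : r = a / (2 * Real.sin (k * Real.pi / 7))) :
    a ^ 6 - 7 * a ^ 4 * r ^ 2 + 14 * a ^ 2 * r ^ 4 - 7 * r ^ 6 = 0 := by
  have hk' : 1 ≤ k ∧ k ≤ 3 := by
    simp only [Set.mem_insert_iff, Set.mem_singleton_iff] at hk
    omega
  have h1 : (1 : ℝ) ≤ k := by exact_mod_cast hk'.1
  have h3 : (k : ℝ) ≤ 3 := by exact_mod_cast hk'.2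
  have hpi := Real.pi_pos
  obtain ⟨x, hx⟩ : ∃ x, x = (k : ℝ) * Real.pi / 7 := ⟨_, rfl⟩
  rw [← hx] at hr
  have hs : 0 < Real.sin x := by
    apply Real.sin_pos_of_pos_of_lt_pi
    · rw [hx]; positivity
    · rw [hx]; nlinarith
  have h7 : Real.sin (2 * (2 * x) + 3 * x) = 0 := by
    have : 2 * (2 * x) + 3 * x = k * Real.pi := by rw [hx]; ring
    rw [this]; exact Real.sin_nat_mul_pi k
  rw [Real.sin_add, Real.sin_two_mul, Real.cos_two_mul (2 * x), Real.sin_two_mul, Real.cos_two_mul x,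
    Real.sin_three_mul, Real.cos_three_mul] at h7
  have hc : Real.cos x ^ 2 = 1 - Real.sin x ^ 2 := Real.cos_sq' x
  have hc4 : Real.cos x ^ 4 = (1 - Real.sin x ^ 2) ^ 2 := by rw [← hc]; ring
  have hc6 : Real.cos x ^ 6 = (1 - Real.sin x ^ 2) ^ 3 := by rw [← hc]; ring
  have key : Real.sin x * (64 * Real.sin x ^ 6 - 112 * Real.sin x ^ 4 + 56 * Real.sin x ^ 2 - 7)
      = 0 := by
    ring_nf at h7
    simp only [hc6, hc4, hc] at h7
    linear_combination -h7
  have key2 := (mul_eq_zero.mp key).resolve_left hs.ne'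
  have har : a = 2 * Real.sin x * r := by rw [hr]; field_simp
  rw [har]
  linear_combination r ^ 6 * key2
end
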